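/- arXiv:0801.4259 — 6 statements merged into one kernel-verified Lean document; each statement's English description precedes it below -/
import Mathlib

section
/- Let H be a complex Hilbert space, M a von Neumann algebra acting on H, and ξ₀ a cyclic and separating vector for M. Let N be another von Neumann algebra acting on H such that the closure of {b ξ₀ : b ∈ N, b ≥ 0} is contained in P♯. Then for every positive element a ∈ N there exists a unique positive element α(a) ∈ M satisfying a ξ₀ = α(a) ξ₀; moreover ‖α(a)‖ ≤ ‖a‖. -/
open scoped InnerProductSpace
open Filter

variable {H : Type*} [NormedAddCommGroup H] [InnerProductSpace ℂ H] [CompleteSpace H]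

/-- The positive cone `P♯`: the closure in `H` of `{a ξ₀ : a ∈ M, a positive}`. -/
def sharpCone (M : VonNeumannAlgebra H) (ξ₀ : H) : Set H :=
  closure {ζ : H | ∃ a : H →L[ℂ] H, a ∈ M ∧ a.IsPositive ∧ a ξ₀ = ζ}

/-- `ξ₀` is a cyclic vector for `M`: the linear span of `{x ξ₀ : x ∈ M}` is dense in `H`. -/
def IsCyclicVector (M : VonNeumannAlgebra H) (ξ₀ : H) : Prop :=
  Dense ((Submodule.span ℂ ((fun x : H →L[ℂ] H => x ξ₀) '' (M : Set (H →L[ℂ] H)))) : Set H)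

/-- `ξ₀` is a separating vector for `M`: `x ∈ M` and `x ξ₀ = 0` imply `x = 0`. -/
def IsSeparatingVector (M : VonNeumannAlgebra H) (ξ₀ : H) : Prop :=
  ∀ x : H →L[ℂ] H, x ∈ M → x ξ₀ = 0 → x = 0

open ContinuousLinearMap

namespace VonNeumannAlgebra

/-- The linear map `x ↦ x ζ` from the commutant of `M` to `H`. -/
noncomputable def commutantOrbitMap (M : VonNeumannAlgebra H) (ζ : H) :
    M.commutant.toStarSubalgebra →ₗ[ℂ] H where
  toFun x := (x : H →L[ℂ] H) ζ
  map_add' x y := by simp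
  map_smul' c x := by simp

theorem commute_apply_of_mem_commutant {M : VonNeumannAlgebra H} {x b : H →L[ℂ] H}
    (hx : x ∈ M.commutant) (hb : b ∈ M) (v : H) : b (x v) = x (b v) :=
  DFunLike.congr_fun (mem_commutant_iff.mp hx b hb) v

/-- A separating vector for `M` is cyclic for the commutant of `M`. -/
theorem denseRange_commutantOrbitMap {M : VonNeumannAlgebra H} {ξ : H}
    (hsep : IsSeparatingVector M ξ) : DenseRange (M.commutantOrbitMap ξ) := by
  let K : Submodule ℂ H := (LinearMap.range (M.commutantOrbitMap ξ)).topologicalClosure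
  have : CompleteSpace K :=
    (Submodule.isClosed_topologicalClosure _).completeSpace_coe
  have hmem : K.starProjection ∈ M := by
    rw [IsStarProjection.mem_iff isStarProjection_starProjection]
    intro y hy
    rw [Submodule.range_starProjection, Module.End.mem_invtSubmodule]
    intro v hv
    refine map_mem_closure y.continuous hv ?_
    rintro _ ⟨x, rfl⟩
    exact ⟨⟨y * x, mul_mem hy x.2⟩, rfl⟩
  have hξ : ξ ∈ K := Submodule.le_topologicalClosure _ ⟨1, rfl⟩
  have hone : 1 - K.starProjection = 0 := by
    refine hsep _ (sub_mem (one_mem M) hmem) ?_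
    simp [Submodule.starProjection_eq_self_iff.mpr hξ]
  intro v
  have hv : K.starProjection v = v := by
    simpa using (DFunLike.congr_fun (sub_eq_zero.mp hone) v).symm
  exact Submodule.starProjection_eq_self_iff.mp hv

theorem conj_inner_apply_of_mem_sharpCone {M : VonNeumannAlgebra H} {ξ ζ : H}
    (hζ : ζ ∈ sharpCone M ξ) {x y : H →L[ℂ] H} (hx : x ∈ M.commutant) (hy : y ∈ M.commutant) :
    (starRingEnd ℂ) ⟪y ξ, x ζ⟫_ℂ = ⟪x ξ, y ζ⟫_ℂ := by
  refine closure_minimal (t := {ζ | (starRingEnd ℂ) ⟪y ξ, x ζ⟫_ℂ = ⟪x ξ, y ζ⟫_ℂ}) ?_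
    (isClosed_eq (by fun_prop) (by fun_prop)) hζ
  rintro _ ⟨b, hbM, hb, rfl⟩
  change (starRingEnd ℂ) ⟪y ξ, x (b ξ)⟫_ℂ = ⟪x ξ, y (b ξ)⟫_ℂ
  rw [inner_conj_symm, ← commute_apply_of_mem_commutant hx hbM,
    ← commute_apply_of_mem_commutant hy hbM]
  exact hb.isSymmetric _ _

theorem inner_apply_nonneg_of_mem_sharpCone {M : VonNeumannAlgebra H} {ξ ζ : H}
    (hζ : ζ ∈ sharpCone M ξ) {x : H →L[ℂ] H} (hx : x ∈ M.commutant) :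
    0 ≤ (⟪x ξ, x ζ⟫_ℂ).re := by
  refine closure_minimal (t := {ζ | 0 ≤ (⟪x ξ, x ζ⟫_ℂ).re}) ?_
    (isClosed_le (by fun_prop) (by fun_prop)) hζ
  rintro _ ⟨b, hbM, hb, rfl⟩
  change 0 ≤ (⟪x ξ, x (b ξ)⟫_ℂ).re
  rw [← commute_apply_of_mem_commutant hx hbM]
  exact hb.re_inner_nonneg_right _

/-- The positive semidefinite form `(x, y) ↦ ⟪x ξ, y ζ⟫` on the commutant of `M`, for `ζ` in the
cone `P♯`. -/
@[reducible]
noncomputable def sharpConeCore {M : VonNeumannAlgebra H} {ξ ζ : H} (hζ : ζ ∈ sharpCone M ξ) :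
    PreInnerProductSpace.Core ℂ M.commutant.toStarSubalgebra where
  inner x y := ⟪(x : H →L[ℂ] H) ξ, (y : H →L[ℂ] H) ζ⟫_ℂ
  conj_inner_symm x y := conj_inner_apply_of_mem_sharpCone hζ x.2 y.2
  re_inner_nonneg x := inner_apply_nonneg_of_mem_sharpCone hζ x.2
  add_left x y z := by simp
  smul_left x y r := by simp [mul_comm]

/-- If `ζ` and `C ξ - ζ` lie in `P♯`, then `x ξ ↦ x ζ` is bounded by `C` on the orbit of `ξ` under
the commutant. -/
theorem norm_apply_le_of_mem_sharpCone {M : VonNeumannAlgebra H} {ξ ζ : H}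
    (hsep : IsSeparatingVector M ξ) {C : ℝ} (hC : 0 ≤ C) (hζ : ζ ∈ sharpCone M ξ)
    (hζC : (C : ℂ) • ξ - ζ ∈ sharpCone M ξ) (x : M.commutant.toStarSubalgebra) :
    ‖(x : H →L[ℂ] H) ζ‖ ≤ C * ‖(x : H →L[ℂ] H) ξ‖ := by
  have hdiag (y : M.commutant.toStarSubalgebra) :
      (⟪(y : H →L[ℂ] H) ξ, (y : H →L[ℂ] H) ζ⟫_ℂ).re ≤ C * ‖(y : H →L[ℂ] H) ξ‖ ^ 2 := by
    have h := inner_apply_nonneg_of_mem_sharpCone hζC y.2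
    have hself : (⟪(y : H →L[ℂ] H) ξ, (y : H →L[ℂ] H) ξ⟫_ℂ).re = ‖(y : H →L[ℂ] H) ξ‖ ^ 2 :=
      inner_self_eq_norm_sq (𝕜 := ℂ) _
    rw [map_sub, map_smul, inner_sub_right, inner_smul_right, Complex.sub_re,
      Complex.re_ofReal_mul, hself] at h
    linarith
  have hcs (y : M.commutant.toStarSubalgebra) :
      ‖⟪(y : H →L[ℂ] H) ξ, (x : H →L[ℂ] H) ζ⟫_ℂ‖ ≤
        C * ‖(x : H →L[ℂ] H) ξ‖ * ‖(y : H →L[ℂ] H) ξ‖ := by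
    have h : ‖⟪(y : H →L[ℂ] H) ξ, (x : H →L[ℂ] H) ζ⟫_ℂ‖ *
        ‖⟪(x : H →L[ℂ] H) ξ, (y : H →L[ℂ] H) ζ⟫_ℂ‖ ≤
        (⟪(y : H →L[ℂ] H) ξ, (y : H →L[ℂ] H) ζ⟫_ℂ).re *
          (⟪(x : H →L[ℂ] H) ξ, (x : H →L[ℂ] H) ζ⟫_ℂ).re :=
      letI := sharpConeCore hζ
      InnerProductSpace.Core.inner_mul_inner_self_le (𝕜 := ℂ) y x
    rw [← conj_inner_apply_of_mem_sharpCone hζ x.2 y.2, RCLike.norm_conj] at h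
    refine abs_le_of_sq_le_sq' ?_ (by positivity) |>.2
    calc _ = _ := pow_two _
      _ ≤ _ := h
      _ ≤ (C * ‖(y : H →L[ℂ] H) ξ‖ ^ 2) * (C * ‖(x : H →L[ℂ] H) ξ‖ ^ 2) :=
        mul_le_mul (hdiag y) (hdiag x) (inner_apply_nonneg_of_mem_sharpCone hζ x.2)
          (by positivity)
      _ = _ := by ring
  have hall (v : H) : ‖⟪v, (x : H →L[ℂ] H) ζ⟫_ℂ‖ ≤ C * ‖(x : H →L[ℂ] H) ξ‖ * ‖v‖ :=
    (denseRange_commutantOrbitMap hsep).induction_on v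
      (isClosed_le (by fun_prop) (by fun_prop)) hcs
  have h := hall ((x : H →L[ℂ] H) ζ)
  rw [inner_self_eq_norm_sq_to_K, norm_pow, RCLike.norm_ofReal, abs_norm] at h
  by_contra! hlt
  nlinarith [norm_nonneg ((x : H →L[ℂ] H) ξ), mul_nonneg hC (norm_nonneg ((x : H →L[ℂ] H) ξ))]

/-- If `ζ` and `C ξ - ζ` lie in `P♯`, then `ζ = b ξ` for a positive `b ∈ M` of norm at most `C`. -/
theorem exists_isPositive_apply_eq_of_mem_sharpCone {M : VonNeumannAlgebra H} {ξ ζ : H}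
    (hsep : IsSeparatingVector M ξ) {C : ℝ} (hC : 0 ≤ C) (hζ : ζ ∈ sharpCone M ξ)
    (hζC : (C : ℂ) • ξ - ζ ∈ sharpCone M ξ) :
    ∃ b ∈ M, b.IsPositive ∧ b ξ = ζ ∧ ‖b‖ ≤ C := by
  have hdense := denseRange_commutantOrbitMap hsep
  have hnorm := norm_apply_le_of_mem_sharpCone hsep hC hζ hζC
  let b : H →L[ℂ] H := (M.commutantOrbitMap ζ).extendOfNorm (M.commutantOrbitMap ξ)
  have hb (x : H →L[ℂ] H) (hx : x ∈ M.commutant) : b (x ξ) = x ζ :=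
    LinearMap.extendOfNorm_eq hdense ⟨C, hnorm⟩ ⟨x, hx⟩
  refine ⟨b, ?_, ?_, hb 1 (one_mem _), LinearMap.opNorm_extendOfNorm_le hdense hC hnorm⟩
  · rw [← M.commutant_commutant, mem_commutant_iff]
    intro y hy
    ext v
    refine hdense.induction_on v (isClosed_eq (by fun_prop) (by fun_prop)) fun x => ?_
    change y (b (x.1 ξ)) = b ((y * x.1) ξ)
    rw [hb _ x.2, hb _ (mul_mem hy x.2)]
    rfl
  · refine ⟨fun v w => ?_, fun v => ?_⟩
    · refine hdense.induction_on₂ (p := fun v w => ⟪b v, w⟫_ℂ = ⟪v, b w⟫_ℂ)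
        (isClosed_eq (by fun_prop) (by fun_prop)) (fun x y => ?_) v w
      change ⟪b (x.1 ξ), y.1 ξ⟫_ℂ = ⟪x.1 ξ, b (y.1 ξ)⟫_ℂ
      rw [hb _ x.2, hb _ y.2, ← inner_conj_symm, conj_inner_apply_of_mem_sharpCone hζ x.2 y.2]
    · refine hdense.induction_on (p := fun v => 0 ≤ (⟪b v, v⟫_ℂ).re) v
        (isClosed_le (by fun_prop) (by fun_prop)) fun x => ?_
      change 0 ≤ (⟪b (x.1 ξ), x.1 ξ⟫_ℂ).re
      rw [hb _ x.2, ← inner_conj_symm, Complex.conj_re]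
      exact inner_apply_nonneg_of_mem_sharpCone hζ x.2

end VonNeumannAlgebra

/-- If the closure of `{b ξ₀ : b ∈ N, b ≥ 0}` is contained in `P♯`, then every
positive `a ∈ N` admits a unique positive `α(a) ∈ M` with `a ξ₀ = α(a) ξ₀`, and `‖α(a)‖ ≤ ‖a‖`. -/
theorem stmt0 (M N : VonNeumannAlgebra H) (ξ₀ : H)
    (hcyc : IsCyclicVector M ξ₀) (hsep : IsSeparatingVector M ξ₀)
    (hsub : closure {ζ : H | ∃ b : H →L[ℂ] H, b ∈ N ∧ b.IsPositive ∧ b ξ₀ = ζ} ⊆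
      sharpCone M ξ₀)
    (a : H →L[ℂ] H) (haN : a ∈ N) (hapos : a.IsPositive) :
    ∃ b : H →L[ℂ] H, (b ∈ M ∧ b.IsPositive ∧ a ξ₀ = b ξ₀ ∧ ‖b‖ ≤ ‖a‖) ∧
      ∀ b' : H →L[ℂ] H, b' ∈ M → b'.IsPositive → a ξ₀ = b' ξ₀ → b' = b := by
  have hcompl : (algebraMap ℝ (H →L[ℂ] H) ‖a‖ - a).IsPositive :=
    (le_def _ _).mp hapos.isSelfAdjoint.le_algebraMap_norm_self
  have hcomplN : algebraMap ℝ (H →L[ℂ] H) ‖a‖ - a ∈ N :=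
    sub_mem (N.toStarSubalgebra.algebraMap_mem (‖a‖ : ℂ)) haN
  obtain ⟨b, hbM, hb, hbξ, hnorm⟩ :=
    VonNeumannAlgebra.exists_isPositive_apply_eq_of_mem_sharpCone hsep (norm_nonneg a)
      (hsub (subset_closure ⟨a, haN, hapos, rfl⟩))
      (hsub (subset_closure ⟨_, hcomplN, hcompl, by simp [Algebra.algebraMap_eq_smul_one]⟩))
  refine ⟨b, ⟨hbM, hb, hbξ.symm, hnorm⟩, fun b' hb'M _ hb' => sub_eq_zero.mp ?_⟩
  exact hsep _ (sub_mem hb'M hbM) (by rw [sub_apply, hbξ, hb', sub_self])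
end

section
/- Let H be a complex Hilbert space, M a von Neumann algebra acting on H, and ξ₀ a separating vector for M. If e is an orthogonal projection on H and b ∈ M satisfies 0 ≤ b ≤ 1 and b ξ₀ = e ξ₀, then b is a projection, i.e. b² = b. -/
open scoped InnerProductSpace
open Filter

variable {H : Type*} [NormedAddCommGroup H] [InnerProductSpace ℂ H] [CompleteSpace H]

/-- A positive operator annihilates every vector on which its quadratic form vanishes. -/
theorem ContinuousLinearMap.IsPositive.apply_eq_zero_of_inner_eq_zero {T : H →L[ℂ] H}
    (hT : T.IsPositive) {x : H} (hx : ⟪T x, x⟫_ℂ = 0) : T x = 0 := by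
  have hsq : CFC.sqrt T * CFC.sqrt T = T :=
    CFC.sqrt_mul_sqrt_self T ((nonneg_iff_isPositive T).2 hT)
  have hsqrt : (CFC.sqrt T).IsPositive := (nonneg_iff_isPositive _).1 (CFC.sqrt_nonneg T)
  have hzero : CFC.sqrt T x = 0 := by
    rw [← inner_self_eq_zero (𝕜 := ℂ), ← hsqrt.inner_left_eq_inner_right,
      ← mul_apply_eq_comp, hsq, hx]
  rw [← hsq, mul_apply_eq_comp, hzero, map_zero]

/-- If `0 ≤ T ≤ 1`, then `T * T ≤ T`. -/
theorem ContinuousLinearMap.IsPositive.sub_mul_self {T : H →L[ℂ] H}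
    (hT : T.IsPositive) (hT' : (1 - T).IsPositive) : (T - T * T).IsPositive := by
  have h₁ : (T * (1 - T) * T).IsPositive := by
    have h := hT'.conj_adjoint T
    rwa [hT.isSelfAdjoint.adjoint_eq] at h
  have h₂ : ((1 - T) * T * (1 - T)).IsPositive := by
    have h := hT.conj_adjoint (1 - T)
    rwa [hT'.isSelfAdjoint.adjoint_eq] at h
  have hsum : T - T * T = T * (1 - T) * T + (1 - T) * T * (1 - T) := by noncomm_ring
  exact hsum ▸ h₁.add h₂

/-- If `ξ₀` separates `M`, `e` is an orthogonal projection on `H`, and `b ∈ M`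
satisfies `0 ≤ b ≤ 1` and `b ξ₀ = e ξ₀`, then `b` is a projection. -/
theorem stmt1 (M : VonNeumannAlgebra H) (ξ₀ : H) (hsep : IsSeparatingVector M ξ₀)
    (e : H →L[ℂ] H) (he_sa : IsSelfAdjoint e) (he_idem : e * e = e)
    (b : H →L[ℂ] H) (hbM : b ∈ M) (hb_pos : b.IsPositive)
    (hb_le : (1 - b).IsPositive) (hbe : b ξ₀ = e ξ₀) :
    b * b = b := by
  have hinner : ⟪(b - b * b) ξ₀, ξ₀⟫_ℂ = 0 := by
    have hb : ⟪b (b ξ₀), ξ₀⟫_ℂ = ⟪b ξ₀, b ξ₀⟫_ℂ := hb_pos.inner_left_eq_inner_right _ _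
    have he : ⟪e (e ξ₀), ξ₀⟫_ℂ = ⟪e ξ₀, e ξ₀⟫_ℂ := he_sa.isSymmetric _ _
    have hee : e (e ξ₀) = e ξ₀ := DFunLike.congr_fun he_idem ξ₀
    rw [sub_apply, mul_apply_eq_comp, inner_sub_left, hb,
      hbe, ← he, hee, sub_self]
  have hzero : b - b * b = 0 :=
    hsep _ (sub_mem hbM (mul_mem hbM hbM))
      ((hb_pos.sub_mul_self hb_le).apply_eq_zero_of_inner_eq_zero hinner)
  exact (sub_eq_zero.1 hzero).symm
end

section
/- Let H be a complex Hilbert space, M a von Neumann algebra acting on H, ξ₀ a cyclic and separating vector for M, and N another von Neumann algebra acting on H with the closure of {b ξ₀ : b ∈ N, b ≥ 0} contained in P♯. Let α : N → B(H) be a linear map such that α(x) ∈ M and α(x) ξ₀ = x ξ₀ for every x ∈ N. Then α is a Jordan homomorphism: α(xy + yx) = α(x)α(y) + α(y)α(x) for all x, y ∈ N. -/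
open scoped InnerProductSpace
open Filter

variable {H : Type*} [NormedAddCommGroup H] [InnerProductSpace ℂ H] [CompleteSpace H]

section PositiveMaps

variable {B : Type*} [CStarAlgebra B] [PartialOrder B] [StarOrderedRing B]

/-- Bernstein polynomials are nonnegative on operators `0 ≤ x ≤ 1`. -/
theorem aeval_bernsteinPolynomial_nonneg {x : B} (h0 : 0 ≤ x) (h1 : x ≤ 1) (n k : ℕ) :
    0 ≤ Polynomial.aeval x (bernsteinPolynomial ℤ n k) := by
  have hpow : ∀ {y : B}, 0 ≤ y → ∀ m : ℕ, 0 ≤ y ^ m := fun {y} hy m => by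
    induction m with
    | zero => simp
    | succ m ih => rw [pow_succ]; exact ((Commute.refl y).pow_left m).mul_nonneg ih hy
  have hc : Commute (x ^ k) ((1 - x) ^ (n - k)) :=
    ((Commute.one_right x).sub_right (Commute.refl x)).pow_pow _ _
  have key := hc.mul_nonneg (hpow h0 k) (hpow (sub_nonneg.2 h1) (n - k))
  simp only [bernsteinPolynomial, map_mul, map_pow, map_sub, map_one, map_natCast,
    Polynomial.aeval_X, mul_assoc]
  rw [← nsmul_eq_mul]
  exact nsmul_nonneg key _

/-- A sum rule for the second moments of the Bernstein polynomials. -/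
theorem bernsteinPolynomial_sum_sq_smul (n : ℕ) :
    ∑ k ∈ Finset.range (n + 1), (k ^ 2) • bernsteinPolynomial ℤ n k =
      (n * (n - 1)) • Polynomial.X ^ 2 + n • Polynomial.X := by
  rw [← bernsteinPolynomial.sum_mul_smul, ← bernsteinPolynomial.sum_smul,
    ← Finset.sum_add_distrib]
  refine Finset.sum_congr rfl fun k _ => ?_
  rw [← add_smul]
  congr 1
  cases k
  · simp
  · simp; ring

variable {S : StarSubalgebra ℂ B} {β : S →ₗ[ℂ] B}

/-- The Bernstein approximation to the Kadison inequality: positivity of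
`∑ k, (k - n β x) β(b k) (k - n β x)` for the Bernstein polynomials `b k` of degree `n` at `x`. -/
theorem bernstein_kadison_inequality (hpos : ∀ b : S, 0 ≤ (b : B) → 0 ≤ β b) (hone : β 1 = 1)
    {x : S} (h0 : 0 ≤ (x : B)) (h1 : (x : B) ≤ 1) (n : ℕ) :
    0 ≤ ((n : ℝ) ^ 2) • (β (x * x) - β x * β x) + (n : ℝ) • (β x - β (x * x)) := by
  set b : ℕ → B := fun k => β (Polynomial.aeval x (bernsteinPolynomial ℤ n k)) with hb
  have hb0 : ∀ k, 0 ≤ b k := fun k => hpos _ <| by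
    have : ((Polynomial.aeval x (bernsteinPolynomial ℤ n k) : S) : B) =
        Polynomial.aeval (x : B) (bernsteinPolynomial ℤ n k) := by
      simp [bernsteinPolynomial]
    rw [this]
    exact aeval_bernsteinPolynomial_nonneg h0 h1 n k
  have s0 : ∑ k ∈ Finset.range (n + 1), b k = 1 := by
    rw [hb, ← map_sum, ← map_sum, bernsteinPolynomial.sum, map_one, hone]
  have s1 : ∑ k ∈ Finset.range (n + 1), (k : ℝ) • b k = (n : ℝ) • β x := by
    have := congrArg (fun p => β (Polynomial.aeval x p)) (bernsteinPolynomial.sum_smul ℤ n)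
    simp only [map_sum, map_nsmul, Polynomial.aeval_X] at this
    simpa [hb, Nat.cast_smul_eq_nsmul] using this
  have s2 : ∑ k ∈ Finset.range (n + 1), ((k : ℝ) ^ 2) • b k =
      ((n : ℝ) * (n - 1)) • β (x * x) + (n : ℝ) • β x := by
    have := congrArg (fun p => β (Polynomial.aeval x p)) (bernsteinPolynomial_sum_sq_smul n)
    simp only [map_sum, map_nsmul, map_add, map_pow, Polynomial.aeval_X] at this
    have hn : ((n : ℝ) * (n - 1)) = ((n * (n - 1) : ℕ) : ℝ) := by cases n <;> simp
    rw [hn, ← pow_two]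
    simp only [← Nat.cast_pow, Nat.cast_smul_eq_nsmul, hb]
    exact this
  have hsa : IsSelfAdjoint (β x) := (hpos x h0).isSelfAdjoint
  have hsum : 0 ≤ ∑ k ∈ Finset.range (n + 1),
      ((k : ℝ) • 1 - (n : ℝ) • β x) * b k * ((k : ℝ) • 1 - (n : ℝ) • β x) := by
    refine Finset.sum_nonneg fun k _ => ?_
    have : IsSelfAdjoint ((k : ℝ) • (1 : B) - (n : ℝ) • β x) :=
      ((IsSelfAdjoint.all (k : ℝ)).smul (.one B)).sub ((IsSelfAdjoint.all (n : ℝ)).smul hsa)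
    exact this.conjugate_nonneg (hb0 k)
  have hexp : ∀ k : ℕ, ((k : ℝ) • 1 - (n : ℝ) • β x) * b k * ((k : ℝ) • 1 - (n : ℝ) • β x) =
      ((k : ℝ) ^ 2) • b k - (n : ℝ) • ((k : ℝ) • b k * β x) - (n : ℝ) • (β x * (k : ℝ) • b k)
        + ((n : ℝ) ^ 2) • (β x * b k * β x) := fun k => by
    simp only [sub_mul, mul_sub, smul_mul_assoc, mul_smul_comm, one_mul, mul_one, smul_sub]
    module
  simp only [hexp, Finset.sum_add_distrib, Finset.sum_sub_distrib, ← Finset.smul_sum,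
    ← Finset.sum_mul, ← Finset.mul_sum, s0, s1, s2] at hsum
  convert hsum using 1
  simp only [smul_mul_assoc, mul_smul_comm, mul_one]
  module

/-- The Kadison inequality for `0 ≤ x ≤ 1`. -/
theorem kadison_inequality (hpos : ∀ b : S, 0 ≤ (b : B) → 0 ≤ β b) (hone : β 1 = 1)
    {x : S} (h0 : 0 ≤ (x : B)) (h1 : (x : B) ≤ 1) : β x * β x ≤ β (x * x) := by
  rw [← sub_nonneg]
  have hlim : Tendsto (fun n : ℕ => (β (x * x) - β x * β x) +
      (1 / ((n : ℝ) + 1)) • (β x - β (x * x))) atTop (nhds (β (x * x) - β x * β x)) := by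
    simpa using tendsto_const_nhds.add
      ((tendsto_one_div_add_atTop_nhds_zero_nat (𝕜 := ℝ)).smul_const (β x - β (x * x)))
  refine ge_of_tendsto' hlim fun n => ?_
  have hn : (0 : ℝ) < (n : ℝ) + 1 := by positivity
  have h := smul_nonneg (show (0 : ℝ) ≤ (((n : ℝ) + 1) ^ 2)⁻¹ by positivity)
    (bernstein_kadison_inequality hpos hone h0 h1 (n + 1))
  convert h using 1
  push_cast
  rw [smul_add, smul_smul, smul_smul, inv_mul_cancel₀ (by positivity), one_smul]
  congr 2
  field_simp

/-- A unital linear map that preserves squares of elements of `[0, 1]` preserves all squares. -/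
theorem map_mul_self_of_unit_interval (hone : β 1 = 1)
    (hsq : ∀ x : S, 0 ≤ (x : B) → (x : B) ≤ 1 → β (x * x) = β x * β x) (x : S) :
    β (x * x) = β x * β x := by
  have hsa : ∀ a : S, IsSelfAdjoint a → β (a * a) = β a * β a := fun a ha => by
    have ha' : IsSelfAdjoint (a : B) := congrArg Subtype.val ha
    set r : ℝ := ‖(a : B)‖ + 1 with hr
    have hr0 : 0 < r := by positivity
    have hle : (a : B) ≤ r • (1 : B) := by
      refine ha'.le_algebraMap_norm_self.trans ?_
      rw [Algebra.algebraMap_eq_smul_one]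
      exact smul_le_smul_of_nonneg_right (by simp [hr]) zero_le_one
    have hge : -(r • (1 : B)) ≤ (a : B) := by
      refine le_trans ?_ ha'.neg_algebraMap_norm_le_self
      rw [Algebra.algebraMap_eq_smul_one]
      exact neg_le_neg (smul_le_smul_of_nonneg_right (by simp [hr]) zero_le_one)
    set y : S := (2 * (r : ℂ))⁻¹ • (a + (r : ℂ) • 1) with hy
    have hrc : (r : ℂ) ≠ 0 := by exact_mod_cast hr0.ne'
    have hyB : (y : B) = (2 * r)⁻¹ • ((a : B) + r • 1) := by
      simp [hy, ← Complex.coe_smul]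
    have hy0 : 0 ≤ (y : B) := by
      rw [hyB]
      exact smul_nonneg (by positivity) (neg_le_iff_add_nonneg.1 hge)
    have hy1 : (y : B) ≤ 1 := by
      rw [hyB]
      calc (2 * r)⁻¹ • ((a : B) + r • 1) ≤ (2 * r)⁻¹ • (r • (1 : B) + r • 1) :=
            smul_le_smul_of_nonneg_left (by gcongr) (by positivity)
        _ = 1 := by
          rw [← add_smul, smul_smul, ← two_mul, inv_mul_cancel₀ (by positivity), one_smul]
    have hay : a = (2 * (r : ℂ)) • y - (r : ℂ) • 1 := by
      rw [hy, smul_smul, mul_inv_cancel₀ (by simpa using hrc)]; simp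
    rw [hay]
    simp only [sub_mul, mul_sub, smul_mul_assoc, mul_smul_comm, one_mul, mul_one, map_sub,
      map_smul, hone, hsq y hy0 hy1]
  have hjordan : ∀ a b : S, IsSelfAdjoint a → IsSelfAdjoint b →
      β (a * b) + β (b * a) = β a * β b + β b * β a := fun a b ha hb => by
    have h := hsa (a + b) (ha.add hb)
    simp only [add_mul, mul_add, map_add, hsa a ha, hsa b hb] at h
    have h' : β a * β a + β b * β b + (β (a * b) + β (b * a)) =
        β a * β a + β b * β b + (β a * β b + β b * β a) := by
      refine Eq.trans ?_ (h.trans ?_) <;> abel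
    exact add_left_cancel h'
  have hj := hjordan (realPart x : S) (imaginaryPart x : S) (realPart x).2 (imaginaryPart x).2
  have hre := hsa _ (realPart x).2
  have him := hsa _ (imaginaryPart x).2
  rw [← realPart_add_I_smul_imaginaryPart x]
  generalize (realPart x : S) = a at *
  generalize (imaginaryPart x : S) = b at *
  simp only [add_mul, mul_add, smul_mul_assoc, mul_smul_comm, map_add, map_smul, hre, him]
  have hj' : β (a * b) = β a * β b + β b * β a - β (b * a) := eq_sub_of_add_eq hj
  rw [hj']
  module

end PositiveMaps

section VonNeumann

open scoped ComplexOrder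

theorem IsSeparatingVector.dense_commutant {M : VonNeumannAlgebra H} {ξ : H}
    (hsep : IsSeparatingVector M ξ) : Dense {ζ : H | ∃ c ∈ M.commutant, c ξ = ζ} := by
  let ev : (H →L[ℂ] H) →ₗ[ℂ] H := (ContinuousLinearMap.apply ℂ H ξ).toLinearMap
  let V : Submodule ℂ H := M.commutant.toStarSubalgebra.toSubalgebra.toSubmodule.map ev
  have hV : (V : Set H) = {ζ : H | ∃ c ∈ M.commutant, c ξ = ζ} := rfl
  let K := V.topologicalClosure
  have : CompleteSpace K := V.isClosed_topologicalClosure.completeSpace_coe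
  have hξ : ξ ∈ K := V.le_topologicalClosure ⟨1, one_mem M.commutant, rfl⟩
  have hmem : K.starProjection ∈ M := by
    rw [VonNeumannAlgebra.IsStarProjection.mem_iff isStarProjection_starProjection]
    intro y hy
    rw [Submodule.range_starProjection]
    intro ζ hζ
    refine map_mem_closure y.continuous hζ ?_
    rintro _ ⟨c, hc, rfl⟩
    exact ⟨y * c, mul_mem (S := VonNeumannAlgebra H) hy hc, rfl⟩
  have hzero := hsep (1 - K.starProjection) (sub_mem (one_mem M) hmem)
    (by simp [Submodule.starProjection_eq_self_iff.2 hξ])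
  rw [← hV]
  intro ζ
  have : K.starProjection ζ = ζ := by rw [← sub_eq_zero.1 hzero]; rfl
  exact Submodule.starProjection_eq_self_iff.1 this

/-- An element of `M` whose value at a separating vector lies in `P♯` is positive. -/
theorem IsSeparatingVector.nonneg_of_apply_mem_sharpCone {M : VonNeumannAlgebra H} {ξ : H}
    (hsep : IsSeparatingVector M ξ) {a : H →L[ℂ] H} (ha : a ∈ M) (hcone : a ξ ∈ sharpCone M ξ) :
    0 ≤ a := by
  have hmove : ∀ c ∈ M.commutant, ∀ b ∈ M, ⟪c (b ξ), c ξ⟫_ℂ = ⟪b (c ξ), c ξ⟫_ℂ :=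
    fun c hc b hb => by
      have := congrArg (fun f : H →L[ℂ] H => f ξ)
        (VonNeumannAlgebra.mem_commutant_iff.1 hc b hb)
      simp only [mul_apply_eq_comp] at this
      rw [this]
  have hdense : ∀ ζ : H, 0 ≤ ⟪a ζ, ζ⟫_ℂ := by
    have hclosed : IsClosed {ζ : H | 0 ≤ ⟪a ζ, ζ⟫_ℂ} :=
      isClosed_le continuous_const (by fun_prop)
    refine fun ζ => hclosed.closure_subset_iff.2 ?_ (hsep.dense_commutant ζ)
    rintro _ ⟨c, hc, rfl⟩
    have hclosed' : IsClosed {ζ : H | 0 ≤ ⟪c ζ, c ξ⟫_ℂ} :=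
      isClosed_le continuous_const (by fun_prop)
    change 0 ≤ ⟪a (c ξ), c ξ⟫_ℂ
    rw [← hmove c hc a ha]
    refine hclosed'.closure_subset_iff.2 ?_ hcone
    rintro _ ⟨b, hb, hbpos, rfl⟩
    change 0 ≤ ⟪c (b ξ), c ξ⟫_ℂ
    rw [hmove c hc b hb]
    exact hbpos.inner_nonneg_left _
  rw [ContinuousLinearMap.nonneg_iff_isPositive, ContinuousLinearMap.isPositive_iff_complex]
  intro ζ
  obtain ⟨hre, him⟩ := Complex.le_def.1 (hdense ζ)
  exact ⟨Complex.ext (by simp) (by simpa using him), hre⟩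

/-- A positive element of `M` with vanishing expectation at a separating vector is zero. -/
theorem IsSeparatingVector.eq_zero_of_inner_eq_zero {M : VonNeumannAlgebra H} {ξ : H}
    (hsep : IsSeparatingVector M ξ) {a : H →L[ℂ] H} (ha : a ∈ M) (hpos : 0 ≤ a)
    (h : ⟪a ξ, ξ⟫_ℂ = 0) : a = 0 := by
  refine hsep a ha ?_
  obtain ⟨b, rfl⟩ := CStarAlgebra.nonneg_iff_eq_star_mul_self.1 hpos
  rw [ContinuousLinearMap.star_eq_adjoint, mul_apply_eq_comp,
    ContinuousLinearMap.adjoint_inner_left, inner_self_eq_zero] at h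
  simp [h]

end VonNeumann

/-- The map `α` (linear on `N`, taking values in `M`, with `α(x) ξ₀ = x ξ₀`)
is a Jordan homomorphism. -/
theorem stmt2 (M N : VonNeumannAlgebra H) (ξ₀ : H)
    (hcyc : IsCyclicVector M ξ₀) (hsep : IsSeparatingVector M ξ₀)
    (hsub : closure {ζ : H | ∃ b : H →L[ℂ] H, b ∈ N ∧ b.IsPositive ∧ b ξ₀ = ζ} ⊆
      sharpCone M ξ₀)
    (α : (H →L[ℂ] H) → (H →L[ℂ] H))
    (hadd : ∀ x ∈ N, ∀ y ∈ N, α (x + y) = α x + α y)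
    (hsmul : ∀ (c : ℂ), ∀ x ∈ N, α (c • x) = c • α x)
    (hmem : ∀ x ∈ N, α x ∈ M)
    (hfix : ∀ x ∈ N, (α x) ξ₀ = x ξ₀) :
    ∀ x ∈ N, ∀ y ∈ N, α (x * y + y * x) = α x * α y + α y * α x := by
  let β : N.toStarSubalgebra →ₗ[ℂ] (H →L[ℂ] H) :=
    { toFun := fun x => α x
      map_add' := fun x y => hadd x x.2 y y.2
      map_smul' := fun c x => hsmul c x x.2 }
  have hpos : ∀ b : N.toStarSubalgebra, 0 ≤ (b : H →L[ℂ] H) → 0 ≤ β b := fun b hb => by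
    refine hsep.nonneg_of_apply_mem_sharpCone (hmem b b.2) (hsub (subset_closure ?_))
    exact ⟨b, b.2, (ContinuousLinearMap.nonneg_iff_isPositive _).1 hb, (hfix b b.2).symm⟩
  have hone : β 1 = 1 := sub_eq_zero.1 <|
    hsep _ (sub_mem (hmem 1 (one_mem N)) (one_mem M)) <| by
      change α 1 ξ₀ - ξ₀ = 0
      simp [hfix 1 (one_mem N)]
  have hsq : ∀ x : N.toStarSubalgebra, β (x * x) = β x * β x :=
    map_mul_self_of_unit_interval hone fun x h0 h1 => by
      have hx : α x ∈ M := hmem x x.2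
      refine sub_eq_zero.1 (hsep.eq_zero_of_inner_eq_zero
        (sub_mem (hmem _ (x * x).2) (mul_mem hx hx))
        (sub_nonneg.2 (kadison_inequality hpos hone h0 h1)) ?_)
      have hxs : (x : H →L[ℂ] H).IsSymmetric := h0.isSelfAdjoint.isSymmetric
      have hαs : (β x).IsSymmetric := (hpos x h0).isSelfAdjoint.isSymmetric
      have e1 : β (x * x) ξ₀ = (x : H →L[ℂ] H) ((x : H →L[ℂ] H) ξ₀) := hfix _ (x * x).2
      have e2 : β x ξ₀ = (x : H →L[ℂ] H) ξ₀ := hfix x x.2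
      have i1 := hxs ((x : H →L[ℂ] H) ξ₀) ξ₀
      have i2 := hαs (β x ξ₀) ξ₀
      simp only [ContinuousLinearMap.coe_coe] at i1 i2
      rw [sub_apply, mul_apply_eq_comp, inner_sub_left, e1, i1, i2,
        e2, sub_self]
  intro x hx y hy
  have h := hsq (⟨x, hx⟩ + ⟨y, hy⟩)
  have hxx := hsq ⟨x, hx⟩
  have hyy := hsq ⟨y, hy⟩
  simp only [add_mul, mul_add, map_add, hxx, hyy] at h
  rw [hadd _ (mul_mem hx hy) _ (mul_mem hy hx)]
  change β (⟨x, hx⟩ * ⟨y, hy⟩) + β (⟨y, hy⟩ * ⟨x, hx⟩) =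
    β ⟨x, hx⟩ * β ⟨y, hy⟩ + β ⟨y, hy⟩ * β ⟨x, hx⟩
  refine add_left_cancel (a := β ⟨x, hx⟩ * β ⟨x, hx⟩ + β ⟨y, hy⟩ * β ⟨y, hy⟩) ?_
  refine Eq.trans ?_ (h.trans ?_) <;> abel
end

section
/- Let H be a complex Hilbert space, M a von Neumann algebra acting on H, ξ₀ a cyclic and separating vector for M, and N another von Neumann algebra acting on H with the closure of {b ξ₀ : b ∈ N, b ≥ 0} contained in P♯. Let α : N → B(H) be a linear map such that α(x) ∈ M and α(x) ξ₀ = x ξ₀ for every x ∈ N. Then α is normal in the following sense: for every net (xᵢ) in N with sup ‖xᵢ‖ < ∞ that converges to x ∈ N in the weak operator topology, the net (α(xᵢ)) converges to α(x) in the weak operator topology. -/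
open scoped InnerProductSpace
open Filter

variable {H : Type*} [NormedAddCommGroup H] [InnerProductSpace ℂ H] [CompleteSpace H]

/-- The orbit `{y ξ : y ∈ S}` of a vector under a von Neumann algebra, as a submodule. -/
noncomputable def VonNeumannAlgebra.orbit (S : VonNeumannAlgebra H) (ξ : H) : Submodule ℂ H :=
  S.toStarSubalgebra.toSubalgebra.toSubmodule.map
    (ContinuousLinearMap.apply ℂ H ξ : (H →L[ℂ] H) →ₗ[ℂ] H)

theorem VonNeumannAlgebra.mem_orbit {S : VonNeumannAlgebra H} {ξ ζ : H} :
    ζ ∈ S.orbit ξ ↔ ∃ y ∈ S, y ξ = ζ :=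
  Iff.rfl

theorem VonNeumannAlgebra.isClosed (S : VonNeumannAlgebra H) :
    IsClosed (S : Set (H →L[ℂ] H)) := by
  rw [← S.centralizer_centralizer]
  exact Set.isClosed_centralizer _

/-- A separating vector for `M` is cyclic for the commutant of `M`. -/
theorem IsSeparatingVector.dense_orbit_commutant {M : VonNeumannAlgebra H} {ξ : H}
    (hsep : IsSeparatingVector M ξ) : Dense (M.commutant.orbit ξ : Set H) := by
  set K := (M.commutant.orbit ξ).topologicalClosure with hK
  have hξ : ξ ∈ K :=
    Submodule.le_topologicalClosure _ (VonNeumannAlgebra.mem_orbit.2 ⟨1, one_mem _, rfl⟩)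
  have hP : K.starProjection ∈ M := by
    rw [VonNeumannAlgebra.IsStarProjection.mem_iff isStarProjection_starProjection]
    intro y hy
    rw [Submodule.range_starProjection, Module.End.mem_invtSubmodule_iff_mapsTo]
    have hmaps : Set.MapsTo y (M.commutant.orbit ξ : Set H) (M.commutant.orbit ξ) := by
      rintro _ ⟨z, hz, rfl⟩
      exact VonNeumannAlgebra.mem_orbit.2 ⟨y * z, mul_mem hy hz, rfl⟩
    exact hmaps.closure y.continuous
  have hzero := hsep (1 - K.starProjection) (sub_mem (one_mem M) hP)
    (by simp [Submodule.starProjection_eq_self_iff.2 hξ])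
  rw [Submodule.dense_iff_topologicalClosure_eq_top, ← hK, eq_top_iff]
  intro v _
  rw [← Submodule.starProjection_eq_self_iff, ← sub_eq_zero.1 hzero]
  rfl

/-- A linear map `α` from `N` to `M` with `α x ξ = x ξ` is bounded if `ξ` is separating for `M`. -/
theorem IsSeparatingVector.exists_norm_le {M N : VonNeumannAlgebra H} {ξ : H}
    (hsep : IsSeparatingVector M ξ) {α : (H →L[ℂ] H) → (H →L[ℂ] H)}
    (hadd : ∀ x ∈ N, ∀ y ∈ N, α (x + y) = α x + α y)
    (hsmul : ∀ (c : ℂ), ∀ x ∈ N, α (c • x) = c • α x)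
    (hmem : ∀ x ∈ N, α x ∈ M) (hfix : ∀ x ∈ N, α x ξ = x ξ) :
    ∃ C : ℝ, ∀ x ∈ N, ‖α x‖ ≤ C * ‖x‖ := by
  let E : Submodule ℂ (H →L[ℂ] H) := N.toStarSubalgebra.toSubalgebra.toSubmodule
  have : CompleteSpace E := N.isClosed.completeSpace_coe
  let g : E →ₗ[ℂ] (H →L[ℂ] H) :=
    { toFun := fun x => α x
      map_add' := fun x y => hadd x x.2 y y.2
      map_smul' := fun c x => hsmul c x x.2 }
  have hg : ∀ (u : ℕ → E) (x : E) (y : H →L[ℂ] H), Tendsto u atTop (nhds x) →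
      Tendsto (g ∘ u) atTop (nhds y) → y = g x := by
    intro u x y hu hy
    have hyM : y ∈ M := M.isClosed.mem_of_tendsto hy (.of_forall fun n => hmem _ (u n).2)
    have hev : Continuous fun T : H →L[ℂ] H => T ξ := continuous_eval_const ξ
    have h₁ : Tendsto (fun n => (u n : H →L[ℂ] H) ξ) atTop (nhds (y ξ)) :=
      ((hev.tendsto y).comp hy).congr fun n => hfix _ (u n).2
    have h₂ : Tendsto (fun n => (u n : H →L[ℂ] H) ξ) atTop (nhds ((x : H →L[ℂ] H) ξ)) :=
      ((hev.comp continuous_subtype_val).tendsto x).comp hu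
    refine sub_eq_zero.1 (hsep _ (sub_mem hyM (hmem _ x.2)) ?_)
    exact sub_eq_zero.2 ((tendsto_nhds_unique h₁ h₂).trans (hfix _ x.2).symm)
  let G := ContinuousLinearMap.ofSeqClosedGraph hg
  exact ⟨‖G‖, fun x hx => G.le_opNorm ⟨x, hx⟩⟩

/-- The map `α` is normal: it is WOT-continuous on bounded nets of `N`. -/
theorem stmt4 (M N : VonNeumannAlgebra H) (ξ₀ : H)
    (hcyc : IsCyclicVector M ξ₀) (hsep : IsSeparatingVector M ξ₀)
    (hsub : closure {ζ : H | ∃ b : H →L[ℂ] H, b ∈ N ∧ b.IsPositive ∧ b ξ₀ = ζ} ⊆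
      sharpCone M ξ₀)
    (α : (H →L[ℂ] H) → (H →L[ℂ] H))
    (hadd : ∀ x ∈ N, ∀ y ∈ N, α (x + y) = α x + α y)
    (hsmul : ∀ (c : ℂ), ∀ x ∈ N, α (c • x) = c • α x)
    (hmem : ∀ x ∈ N, α x ∈ M)
    (hfix : ∀ x ∈ N, (α x) ξ₀ = x ξ₀)
    (ι : Type*) (l : Filter ι) [l.NeBot]
    (x : ι → (H →L[ℂ] H)) (hxN : ∀ i, x i ∈ N)
    (hbdd : ∃ C : ℝ, ∀ i, ‖x i‖ ≤ C)
    (x₀ : H →L[ℂ] H) (hx₀ : x₀ ∈ N)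
    (hWOT : ∀ ζ η : H, Tendsto (fun i => ⟪(x i) ζ, η⟫_ℂ) l (nhds ⟪x₀ ζ, η⟫_ℂ)) :
    ∀ ζ η : H, Tendsto (fun i => ⟪(α (x i)) ζ, η⟫_ℂ) l (nhds ⟪(α x₀) ζ, η⟫_ℂ) := by
  obtain ⟨C, hC⟩ := hbdd
  obtain ⟨D, hD⟩ := hsep.exists_norm_le hadd hsmul hmem hfix
  intro ζ η
  have hbound : ∀ i, ‖α (x i)‖ ≤ |D| * |C| := fun i => (hD _ (hxN i)).trans <|
    mul_le_mul (le_abs_self D) ((hC i).trans (le_abs_self C)) (norm_nonneg _) (abs_nonneg D)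
  have hlip : ∀ i, LipschitzWith (|D| * |C| * ‖η‖).toNNReal fun ζ => ⟪α (x i) ζ, η⟫_ℂ := by
    refine fun i => LipschitzWith.of_dist_le' fun v w => ?_
    rw [dist_eq_norm, dist_eq_norm, ← inner_sub_left, ← map_sub]
    calc ‖⟪α (x i) (v - w), η⟫_ℂ‖ ≤ ‖α (x i) (v - w)‖ * ‖η‖ := norm_inner_le_norm _ _
      _ ≤ |D| * |C| * ‖v - w‖ * ‖η‖ := by
        gcongr
        exact (α (x i)).le_of_opNorm_le (hbound i) _
      _ = |D| * |C| * ‖η‖ * ‖v - w‖ := by ring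
  have hclosed := (LipschitzWith.uniformEquicontinuous _ _ hlip).equicontinuous
    |>.isClosed_setOfPred_tendsto (l := l) (f := fun ζ => ⟪α x₀ ζ, η⟫_ℂ) (by fun_prop)
  refine hclosed.closure_subset_iff.2 ?_ (hsep.dense_orbit_commutant ζ)
  rintro _ ⟨y, hy, rfl⟩
  have hcomm : ∀ z ∈ N, ⟪α z (y ξ₀), η⟫_ℂ = ⟪z ξ₀, ContinuousLinearMap.adjoint y η⟫_ℂ := by
    intro z hz
    have h : α z (y ξ₀) = y (α z ξ₀) :=
      DFunLike.congr_fun (VonNeumannAlgebra.mem_commutant_iff.1 hy _ (hmem z hz)) ξ₀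
    rw [h, hfix z hz, ContinuousLinearMap.adjoint_inner_right]
  change Tendsto (fun i => ⟪α (x i) (y ξ₀), η⟫_ℂ) l (nhds ⟪α x₀ (y ξ₀), η⟫_ℂ)
  rw [hcomm _ hx₀]
  exact (hWOT _ _).congr fun i => (hcomm _ (hxN i)).symm
end

section
/- Let H be a complex Hilbert space, M a von Neumann algebra acting on H, and ξ₀ a cyclic and separating vector for M. Let M₂ be a von Neumann subalgebra of M. If b ∈ M is positive and b ξ₀ lies in the closure of {c ξ₀ : c ∈ M₂, c ≥ 0}, then b ∈ M₂. -/
open scoped InnerProductSpace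
open Filter

variable {H : Type*} [NormedAddCommGroup H] [InnerProductSpace ℂ H] [CompleteSpace H]

open Topology

/-- A vector which is separating for `M` is cyclic for the commutant of `M`. -/
theorem IsSeparatingVector.isCyclicVector_commutant {M : VonNeumannAlgebra H} {ξ₀ : H}
    (hsep : IsSeparatingVector M ξ₀) : IsCyclicVector M.commutant ξ₀ := by
  set S : Submodule ℂ H := Submodule.span ℂ
    ((fun x : H →L[ℂ] H => x ξ₀) '' (M.commutant : Set (H →L[ℂ] H)))
  set K : Submodule ℂ H := S.topologicalClosure
  have : CompleteSpace K := S.isClosed_topologicalClosure.completeSpace_coe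
  have hSinv : ∀ y ∈ M.commutant, ∀ v ∈ S, y v ∈ S := by
    intro y hy v hv
    induction hv using Submodule.span_induction with
    | mem v hv =>
      obtain ⟨x, hx, rfl⟩ := hv
      exact Submodule.subset_span ⟨y * x, mul_mem hy hx, rfl⟩
    | zero => simp
    | add v w _ _ hv hw => simpa using add_mem hv hw
    | smul a v _ hv => simpa using S.smul_mem a hv
  have hmem : K.starProjection ∈ M := by
    rw [VonNeumannAlgebra.IsStarProjection.mem_iff isStarProjection_starProjection]
    intro y hy
    rw [Submodule.range_starProjection, Module.End.mem_invtSubmodule]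
    intro v hv
    exact map_mem_closure y.continuous hv (hSinv y hy)
  have hξ : ξ₀ ∈ K :=
    S.le_topologicalClosure (Submodule.subset_span ⟨1, one_mem _, rfl⟩)
  have hone : 1 - K.starProjection = 0 := by
    refine hsep _ (sub_mem (one_mem M) hmem) ?_
    simp [Submodule.starProjection_eq_self_iff.mpr hξ]
  intro v
  change v ∈ K
  rw [← Submodule.starProjection_eq_self_iff, ← sub_eq_zero.mp hone]
  rfl

/-- If `a` is a unit commuting with `y`, then so does its inverse. -/
theorem Commute.ringInverse_right_of_isUnit {R : Type*} [MonoidWithZero R] {y a : R}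
    (h : Commute y a) (ha : IsUnit a) : Commute y (Ring.inverse a) := by
  obtain ⟨u, rfl⟩ := ha
  simpa using h

/-- A positive operator `c` satisfies `‖v‖ ≤ ‖(c + 1) v‖`. -/
theorem ContinuousLinearMap.IsPositive.norm_le_norm_add_one {E : Type*} [NormedAddCommGroup E]
    [InnerProductSpace ℂ E] {c : E →L[ℂ] E} (hc : c.IsPositive) (v : E) : ‖v‖ ≤ ‖(c + 1) v‖ := by
  have h₁ : ‖v‖ * ‖v‖ ≤ ‖(c + 1) v‖ * ‖v‖ := by
    calc ‖v‖ * ‖v‖ ≤ RCLike.re ⟪(c + 1) v, v⟫_ℂ := by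
          have := hc.re_inner_nonneg_left v
          have h := inner_self_eq_norm_mul_norm (𝕜 := ℂ) v
          simp only [add_apply, one_apply_eq_self, inner_add_left, map_add]
          linarith
      _ ≤ ‖(c + 1) v‖ * ‖v‖ := re_inner_le_norm _ _
  rcases (norm_nonneg v).eq_or_lt with h | h
  · simp [← h]
  · exact le_of_mul_le_mul_right h₁ h

/-- If `c` is a positive operator, then `c + 1` is invertible. -/
theorem ContinuousLinearMap.IsPositive.isUnit_add_one {c : H →L[ℂ] H} (hc : c.IsPositive) :
    IsUnit (c + 1) := by
  have h : (0 : H →L[ℂ] H) ≤ c := (ContinuousLinearMap.nonneg_iff_isPositive c).mpr hc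
  exact CStarAlgebra.isUnit_of_le 1 (le_add_of_nonneg_left h) isStrictlyPositive_one

/-- If positive operators `c n` converge pointwise to the bounded operator `b` on a set with dense
linear span, then `(c n + 1)⁻¹ (b + 1)` converges strongly to the identity. -/
theorem tendsto_inverse_add_one_apply {b : H →L[ℂ] H} {c : ℕ → H →L[ℂ] H}
    (hc : ∀ n, (c n).IsPositive) {D : Set H} (hD : Dense (Submodule.span ℂ D : Set H))
    (hlim : ∀ v ∈ D, Tendsto (fun n => c n v) atTop (𝓝 (b v))) (u : H) :
    Tendsto (fun n => Ring.inverse (c n + 1) ((b + 1) u)) atTop (𝓝 u) := by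
  have hbound : ∀ n v, ‖Ring.inverse (c n + 1) v‖ ≤ ‖v‖ := by
    intro n v
    have h : (c n + 1) (Ring.inverse (c n + 1) v) = v :=
      congr($(Ring.mul_inverse_cancel _ (hc n).isUnit_add_one) v)
    simpa only [h] using (hc n).norm_le_norm_add_one (Ring.inverse (c n + 1) v)
  have hequi : Equicontinuous fun n v => Ring.inverse (c n + 1) ((b + 1) v) := by
    refine (LipschitzWith.uniformEquicontinuous _ ‖b + 1‖₊ fun n => ?_).equicontinuous
    refine LipschitzWith.of_dist_le_mul fun v w => ?_
    rw [dist_eq_norm, dist_eq_norm, ← map_sub, ← map_sub]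
    exact (hbound n _).trans ((b + 1).le_opNorm _)
  have hclosed := hequi.isClosed_setOfPred_tendsto (l := atTop) continuous_id
  refine hclosed.closure_subset_iff.mpr ?_ (hD u)
  intro v hv
  change Tendsto (fun n => Ring.inverse (c n + 1) ((b + 1) v)) atTop (𝓝 v)
  induction hv using Submodule.span_induction with
  | mem v hv =>
    rw [tendsto_iff_norm_sub_tendsto_zero]
    refine squeeze_zero (fun _ => norm_nonneg _) (fun n => ?_)
      (tendsto_iff_norm_sub_tendsto_zero.mp (hlim v hv))
    have hv' : Ring.inverse (c n + 1) ((c n + 1) v) = v :=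
      congr($(Ring.inverse_mul_cancel _ (hc n).isUnit_add_one) v)
    have hdiff : Ring.inverse (c n + 1) ((b + 1) v) - v
        = Ring.inverse (c n + 1) (b v - c n v) := by
      calc Ring.inverse (c n + 1) ((b + 1) v) - v
          = Ring.inverse (c n + 1) ((b + 1) v) - Ring.inverse (c n + 1) ((c n + 1) v) := by rw [hv']
        _ = Ring.inverse (c n + 1) (b v - c n v) := by rw [← map_sub]; simp
    rw [hdiff, norm_sub_rev (c n v)]
    exact hbound n _
  | zero => simp
  | add v w _ _ hv hw => simpa only [map_add] using hv.add hw
  | smul a v _ hv => simpa only [map_smul] using hv.const_smul a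

/-- If `M₂ ⊆ M` is a von Neumann subalgebra, `b ∈ M` is positive and `b ξ₀`
lies in the closure of `{c ξ₀ : c ∈ M₂, c ≥ 0}`, then `b ∈ M₂`. -/
theorem stmt7 (M M₂ : VonNeumannAlgebra H) (ξ₀ : H)
    (hcyc : IsCyclicVector M ξ₀) (hsep : IsSeparatingVector M ξ₀)
    (hsub : (M₂ : Set (H →L[ℂ] H)) ⊆ (M : Set (H →L[ℂ] H)))
    (b : H →L[ℂ] H) (hbM : b ∈ M) (hb_pos : b.IsPositive)
    (hbξ : b ξ₀ ∈ closure {ζ : H | ∃ c : H →L[ℂ] H, c ∈ M₂ ∧ c.IsPositive ∧ c ξ₀ = ζ}) :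
    b ∈ M₂ := by
  obtain ⟨z, hz, hzlim⟩ := mem_closure_iff_seq_limit.mp hbξ
  choose c hcM₂ hcpos hcz using hz
  have hlim : ∀ v ∈ (fun x : H →L[ℂ] H => x ξ₀) '' (M.commutant : Set (H →L[ℂ] H)),
      Tendsto (fun n => c n v) atTop (𝓝 (b v)) := by
    rintro _ ⟨x, hx, rfl⟩
    have hcomm : ∀ a ∈ M, a (x ξ₀) = x (a ξ₀) := fun a ha =>
      congr($(VonNeumannAlgebra.mem_commutant_iff.mp hx a ha) ξ₀)
    simp only [hcomm b hbM, fun n => hcomm (c n) (hsub (hcM₂ n)), hcz]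
    exact (x.continuous.tendsto _).comp hzlim
  have hres := tendsto_inverse_add_one_apply hcpos hsep.isCyclicVector_commutant hlim
  have hbunit := hb_pos.isUnit_add_one
  have hbinv : ∀ v, (b + 1) (Ring.inverse (b + 1) v) = v := fun v =>
    congr($(Ring.mul_inverse_cancel _ hbunit) v)
  have hstrong : ∀ v, Tendsto (fun n => Ring.inverse (c n + 1) v) atTop
      (𝓝 (Ring.inverse (b + 1) v)) := fun v => by
    simpa only [hbinv] using hres (Ring.inverse (b + 1) v)
  rw [← VonNeumannAlgebra.commutant_commutant M₂, VonNeumannAlgebra.mem_commutant_iff]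
  intro y hy
  have hcomm : Commute y (Ring.inverse (b + 1)) := by
    ext v
    refine tendsto_nhds_unique ((y.continuous.tendsto _).comp (hstrong v)) ?_
    refine (hstrong (y v)).congr fun n => ?_
    have hyc : Commute y (c n) := (VonNeumannAlgebra.mem_commutant_iff.mp hy _ (hcM₂ n)).symm
    have hinv := (hyc.add_right (Commute.one_right y)).ringInverse_right_of_isUnit
      (hcpos n).isUnit_add_one
    exact congr($(hinv.eq.symm) v)
  have hyb : Commute y (b + 1) := by
    simpa [Ring.inverse_inverse hbunit] using hcomm.ringInverse_right_of_isUnit hbunit.ringInverse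
  simpa using (hyb.sub_right (Commute.one_right y)).eq
end

section
/- Let A ⊆ B be von Neumann algebras acting on a complex Hilbert space K, and let η ∈ K be a vector that is cyclic for A, separating for B, and tracial for B, i.e. ⟨x y η, η⟩ = ⟨y x η, η⟩ for all x, y ∈ B. Then A = B. -/
open scoped InnerProductSpace
open Filter

variable {H : Type*} [NormedAddCommGroup H] [InnerProductSpace ℂ H] [CompleteSpace H]

open ContinuousLinearMap in
/-- The orbit of a cyclic vector is dense. -/
theorem IsCyclicVector.dense_orbit {M : VonNeumannAlgebra H} {ξ : H} (h : IsCyclicVector M ξ) :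
    Dense ((fun x : H →L[ℂ] H => x ξ) '' (M : Set (H →L[ℂ] H))) := by
  have hspan : (Submodule.span ℂ ((fun x : H →L[ℂ] H => x ξ) '' (M : Set (H →L[ℂ] H))) : Set H) =
      (fun x : H →L[ℂ] H => x ξ) '' (M : Set (H →L[ℂ] H)) :=
    congrArg (SetLike.coe (A := Submodule ℂ H)) <| Submodule.span_eq
      ((Subalgebra.toSubmodule M.toStarSubalgebra.toSubalgebra).map (apply ℂ H ξ).toLinearMap)
  rw [IsCyclicVector, hspan] at h
  exact h

/-- A vector tracial for `M` satisfies `‖x⋆ ξ‖ = ‖x ξ‖` for all `x ∈ M`. -/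
theorem norm_star_apply_of_tracial {M : VonNeumannAlgebra H} {ξ : H}
    (htr : ∀ x ∈ M, ∀ y ∈ M, ⟪(x * y) ξ, ξ⟫_ℂ = ⟪(y * x) ξ, ξ⟫_ℂ)
    {x : H →L[ℂ] H} (hx : x ∈ M) : ‖star x ξ‖ = ‖x ξ‖ := by
  have key := htr x hx (star x) (star_mem hx)
  simp only [mul_apply_eq_comp, ContinuousLinearMap.star_eq_adjoint,
    ContinuousLinearMap.adjoint_inner_left] at key
  rw [← ContinuousLinearMap.adjoint_inner_right, inner_self_eq_norm_sq_to_K,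
    inner_self_eq_norm_sq_to_K] at key
  rw [ContinuousLinearMap.star_eq_adjoint]
  exact (sq_eq_sq₀ (norm_nonneg _) (norm_nonneg _)).mp (by exact_mod_cast key)

/-- If `ξ` is cyclic for `A ⊆ B` and tracial for `B`, then the vector functional
`x ↦ ⟪x ξ, ξ⟫` is invariant under exchanging `x ∈ B` with an element of the commutant of `A`. -/
theorem inner_mul_comm_of_mem_commutant {A B : VonNeumannAlgebra H} (hAB : A ≤ B) {ξ : H}
    (hcyc : IsCyclicVector A ξ)
    (htr : ∀ x ∈ B, ∀ y ∈ B, ⟪(x * y) ξ, ξ⟫_ℂ = ⟪(y * x) ξ, ξ⟫_ℂ)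
    {t x : H →L[ℂ] H} (ht : t ∈ A.commutant) (hx : x ∈ B) :
    ⟪t (x ξ), ξ⟫_ℂ = ⟪x (t ξ), ξ⟫_ℂ := by
  obtain ⟨u, hu, hlim⟩ := mem_closure_iff_seq_limit.mp (hcyc.dense_orbit (x ξ))
  choose a ha hau using hu
  obtain rfl : (fun n => a n ξ) = u := funext hau
  have hlim_star : Tendsto (fun n => star (a n) ξ) atTop (nhds (star x ξ)) := by
    rw [tendsto_iff_norm_sub_tendsto_zero] at hlim ⊢
    refine hlim.congr fun n => ?_
    have := norm_star_apply_of_tracial htr (sub_mem (hAB (ha n)) hx)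
    simpa using this.symm
  have hleft : Tendsto (fun n => ⟪t (a n ξ), ξ⟫_ℂ) atTop (nhds ⟪t (x ξ), ξ⟫_ℂ) :=
    ((t.continuous.tendsto _).comp hlim).inner tendsto_const_nhds
  have hright : Tendsto (fun n => ⟪t ξ, star (a n) ξ⟫_ℂ) atTop (nhds ⟪t ξ, star x ξ⟫_ℂ) :=
    tendsto_const_nhds.inner hlim_star
  simp only [ContinuousLinearMap.star_eq_adjoint,
    ContinuousLinearMap.adjoint_inner_right] at hright
  refine tendsto_nhds_unique hleft (hright.congr fun n => ?_)
  have hcomm := VonNeumannAlgebra.mem_commutant_iff.mp ht (a n) (ha n)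
  exact congrArg (fun v => ⟪v, ξ⟫_ℂ) (DFunLike.congr_fun hcomm ξ)

/-- If `ξ` is cyclic for `A ⊆ B` and tracial for `B`, then every element of the commutant of `A`
commutes with `B`. -/
theorem commutant_le_commutant_of_tracial {A B : VonNeumannAlgebra H} (hAB : A ≤ B) {ξ : H}
    (hcyc : IsCyclicVector A ξ)
    (htr : ∀ x ∈ B, ∀ y ∈ B, ⟪(x * y) ξ, ξ⟫_ℂ = ⟪(y * x) ξ, ξ⟫_ℂ) :
    A.commutant ≤ B.commutant := by
  intro t ht
  have hcomm (a : H →L[ℂ] H) (ha : a ∈ A) (v : H) : a (t v) = t (a v) :=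
    DFunLike.congr_fun (VonNeumannAlgebra.mem_commutant_iff.mp ht a ha) v
  refine VonNeumannAlgebra.mem_commutant_iff.mpr fun b hb => ?_
  refine DFunLike.coe_injective <| (b * t).continuous.ext_on hcyc.dense_orbit (t * b).continuous ?_
  rintro _ ⟨a, ha, rfl⟩
  refine hcyc.dense_orbit.eq_of_inner_left ℂ ?_
  rintro _ ⟨c, hc, rfl⟩
  have key := inner_mul_comm_of_mem_commutant hAB hcyc htr ht
    (mul_mem (mul_mem (star_mem (hAB hc)) hb) (hAB ha))
  simp only [mul_apply_eq_comp] at key ⊢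
  rw [← hcomm _ (star_mem hc), hcomm a ha, ContinuousLinearMap.star_eq_adjoint,
    ContinuousLinearMap.adjoint_inner_left, ContinuousLinearMap.adjoint_inner_left] at key
  exact key.symm

/-- If `A ⊆ B` are von Neumann algebras and `η` is cyclic for `A`, separating
for `B`, and tracial for `B`, then `A = B`. -/
theorem stmt9 {K : Type*} [NormedAddCommGroup K] [InnerProductSpace ℂ K] [CompleteSpace K]
    (A B : VonNeumannAlgebra K)
    (hAB : (A : Set (K →L[ℂ] K)) ⊆ (B : Set (K →L[ℂ] K)))
    (η : K)
    (hcycA : IsCyclicVector A η)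
    (hsepB : IsSeparatingVector B η)
    (htr : ∀ x ∈ B, ∀ y ∈ B, ⟪(x * y) η, η⟫_ℂ = ⟪(y * x) η, η⟫_ℂ) :
    A = B := by
  refine le_antisymm hAB fun b hb => ?_
  rw [← VonNeumannAlgebra.commutant_commutant A]
  refine VonNeumannAlgebra.mem_commutant_iff.mpr fun t ht => ?_
  exact (VonNeumannAlgebra.mem_commutant_iff.mp
    (commutant_le_commutant_of_tracial hAB hcycA htr ht) b hb).symm
end
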